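/- Let n=(n₁,n₂,n₃)∈ℤ³ with all nᵢ≥1, let △ be the triangle of G with vertices (0,0), (1,0), (1,1), and let △' be the adjacent triangle with vertices (0,0), (0,1), (1,1), so that △̄∩△̄' is the type-3 edge from (0,0) to (1,1). If f ∈ V_n is divisible by (x−y)^{n₁+n₂−1} in ℝ[x,y], then λ_△^β(f) = 0 for every translate β ∈ B_n(△̂) ∩ B_n(△̂'). -/

import Mathlib

/- ## The three-directional (type-I) grid -/

noncomputable section

open MvPolynomial Set Function

/-- Points of the plane. -/
abbrev Pt := ℝ × ℝ

/-- Bivariate real polynomials `ℝ[x,y]`. -/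
abbrev BPoly := MvPolynomial (Fin 2) ℝ

/-- Evaluation of a bivariate polynomial at a point of the plane. -/
def evalP (q : BPoly) (p : Pt) : ℝ := MvPolynomial.eval ![p.1, p.2] q

/-- Triangles of the three-directional grid `G`:  `⟨v, false⟩` is the "lower"
triangle with vertices `v, v+(1,0), v+(1,1)`, and `⟨v, true⟩` is the "upper"
triangle with vertices `v, v+(0,1), v+(1,1)`. -/
structure Tri where
  v : ℤ × ℤ
  up : Bool
deriving DecidableEq

namespace Tri

/-- The open triangle in the plane realizing a combinatorial triangle. -/
def toSet (T : Tri) : Set Pt :=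
  if T.up then
    {p | (T.v.1 : ℝ) < p.1 ∧ p.1 - (T.v.1 : ℝ) < p.2 - (T.v.2 : ℝ) ∧ p.2 < (T.v.2 : ℝ) + 1}
  else
    {p | (T.v.2 : ℝ) < p.2 ∧ p.2 - (T.v.2 : ℝ) < p.1 - (T.v.1 : ℝ) ∧ p.1 < (T.v.1 : ℝ) + 1}

/-- The closed triangle. -/
def cl (T : Tri) : Set Pt := closure T.toSet

/-- The three lattice vertices of a triangle. -/
def vertices (T : Tri) : Finset (ℤ × ℤ) :=
  if T.up then {T.v, (T.v.1, T.v.2 + 1), (T.v.1 + 1, T.v.2 + 1)}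
  else {T.v, (T.v.1 + 1, T.v.2), (T.v.1 + 1, T.v.2 + 1)}

end Tri

/-- Edges of the grid: a lattice point together with a direction type
(`0 ↦ e₁ = (1,0)`, `1 ↦ e₂ = (0,1)`, `2 ↦ e₃ = (1,1)`); the edge of type `i`
at `v` joins `v` to `v + eᵢ`. -/
abbrev Edge := (ℤ × ℤ) × Fin 3

/-- The three direction vectors `e₁, e₂, e₃`. -/
def dirZ : Fin 3 → ℤ × ℤ := ![(1, 0), (0, 1), (1, 1)]

/-- The three edges of a triangle. -/
def Tri.edges (T : Tri) : Finset Edge :=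
  if T.up then {((T.v.1, T.v.2 + 1), 0), (T.v, 1), (T.v, 2)}
  else {(T.v, 0), ((T.v.1 + 1, T.v.2), 1), (T.v, 2)}

/-- The open segment realizing an edge. -/
def Edge.seg (ε : Edge) : Set Pt :=
  {p | ∃ t : ℝ, 0 < t ∧ t < 1 ∧
    p = ((ε.1.1 : ℝ) + t * ((dirZ ε.2).1 : ℝ), (ε.1.2 : ℝ) + t * ((dirZ ε.2).2 : ℝ))}

/-- `M*`: the union of the closed triangles of a multicell domain. -/
def Mstar (M : Finset Tri) : Set Pt := ⋃ T ∈ M, T.cl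

/-- `ℙ(M,V)`: continuous functions on `M*` whose restriction to each triangle
of `M` is the restriction of a polynomial in `V`. -/
def PP (M : Finset Tri) (V : Set BPoly) : Set (Pt → ℝ) :=
  {f | ContinuousOn f (Mstar M) ∧ ∀ T ∈ M, ∃ q ∈ V, EqOn f (evalP q) T.toSet}

/-- The diamond of an edge: union of the closed triangles of `M` having `ε`
as an edge. -/
def diamond (M : Finset Tri) (ε : Edge) : Set Pt :=
  ⋃ T ∈ M.filter (fun T => ε ∈ T.edges), T.cl

/-- The spline space with edge smoothness `d` on the multicell domain `M`:
piecewise polynomials (pieces from `V`) which are `C^{dᵢ}` on the diamond of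
every edge of type `i` of `M`. -/
def SplineSpace (M : Finset Tri) (V : Set BPoly) (d : Fin 3 → ℕ) : Set (Pt → ℝ) :=
  {f | f ∈ PP M V ∧
    ∀ ε : Edge, (∃ T ∈ M, ε ∈ T.edges) → ContDiffOn ℝ (d ε.2) f (diamond M ε)}

/-- Directional derivative of a polynomial along an integer vector. -/
def dirD (e : ℤ × ℤ) (q : BPoly) : BPoly :=
  (e.1 : ℝ) • MvPolynomial.pderiv (0 : Fin 2) q + (e.2 : ℝ) • MvPolynomial.pderiv (1 : Fin 2) q

/-- The mixed directional derivative operator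
`D_s = (∂_{e₁})^{s₁} (∂_{e₂})^{s₂} (∂_{e₃})^{s₃}`. -/
def Dmix (s : Fin 3 → ℕ) (q : BPoly) : BPoly :=
  (dirD (dirZ 0))^[s 0] ((dirD (dirZ 1))^[s 1] ((dirD (dirZ 2))^[s 2] q))

/-- The index sets `Iᵢ^d`; `I₁^d = {s | s₂+s₃ ≤ d₁}` and cyclically. -/
def Iset (d : Fin 3 → ℕ) (i : Fin 3) : Set (Fin 3 → ℕ) :=
  {s | s (i + 1) + s (i + 2) ≤ d i}

/-- Two triangles of the grid are adjacent if they are distinct and share an edge. -/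
def Adj (T T' : Tri) : Prop := T ≠ T' ∧ ∃ ε : Edge, ε ∈ T.edges ∧ ε ∈ T'.edges

/-- `c` is an edge-connected chain of length `m` from `T` to `T'`. -/
def TriIsChain (T T' : Tri) (m : ℕ) (c : ℕ → Tri) : Prop :=
  c 0 = T ∧ c m = T' ∧ ∀ k < m, Adj (c k) (c (k + 1))

/-- The set of types of the edges crossed by a chain. -/
def chainTypes (m : ℕ) (c : ℕ → Tri) : Set (Fin 3) :=
  {i | ∃ k < m, ∃ ε : Edge, ε.2 = i ∧ ε ∈ (c k).edges ∧ ε ∈ (c (k + 1)).edges}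

/-- Minimal length of an edge-connected chain between two triangles. -/
def minLen (T T' : Tri) : ℕ := sInf {m | ∃ c, TriIsChain T T' m c}

/-- The smoothness type `SmType(△,△')`: the types of the edges crossed by a
shortest edge-connected chain from `△` to `△'`. -/
def SmType (T T' : Tri) : Set (Fin 3) :=
  {i | ∃ c, TriIsChain T T' (minLen T T') c ∧ i ∈ chainTypes (minLen T T') c}

/-- `q` is the polynomial piece of `f` on the triangle `T`. -/
def IsPiece (f : Pt → ℝ) (T : Tri) (q : BPoly) : Prop := EqOn f (evalP q) T.toSet

/-- The strongly regular spline space `Ŝ^d(M,V)`: piecewise polynomials such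
that for any two triangles of `M` with intersecting closures, the derivatives
`D_s`, `s ∈ ⋂_{i ∈ SmType(△,△')} Iᵢ^d`, of the two polynomial pieces agree on the
intersection of the closures (i.e. `D_s f` is continuous there). -/
def StrongSpline (M : Finset Tri) (V : Set BPoly) (d : Fin 3 → ℕ) : Set (Pt → ℝ) :=
  {f | f ∈ PP M V ∧
    ∀ T ∈ M, ∀ T' ∈ M, (T.cl ∩ T'.cl).Nonempty →
      ∀ s : Fin 3 → ℕ, (∀ i ∈ SmType T T', s ∈ Iset d i) →
        ∀ q q' : BPoly, IsPiece f T q → IsPiece f T' q' →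
          ∀ x ∈ T.cl ∩ T'.cl, evalP (Dmix s q) x = evalP (Dmix s q') x}

/-- Kissing triangles: the closures intersect in exactly one point. -/
def Kissing (T T' : Tri) : Prop := ∃ p : Pt, T.cl ∩ T'.cl = {p}

/-- An over-concave vertex of `M`: exactly one triangle of `star(ν)` is
missing from `M`. -/
def OverConcave (M : Finset Tri) (ν : ℤ × ℤ) : Prop :=
  ∃! T : Tri, ν ∈ T.vertices ∧ T ∉ M

/- ## Type-I box splines -/

/-- The Courant hat function `B_{(1,1,1)}`: the piecewise linear function on
`G` supported on `star((1,1))` with value `1` at `(1,1)` and `0` at all other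
lattice points. -/
def hat (p : Pt) : ℝ :=
  max 0 (min (min (min p.1 p.2) (min (2 - p.1) (2 - p.2)))
             (min (1 - (p.1 - p.2)) (1 + (p.1 - p.2))))

/-- The type-I box spline `B_{(n₁,n₂,n₃)}`, defined by repeated directional
convolution starting from the Courant hat function (the result is independent
of the order of the convolutions); junk value `0` if some `nᵢ = 0`. -/
noncomputable def boxN : ℕ → ℕ → ℕ → Pt → ℝ
  | 0, _, _, _ => 0
  | _ + 1, 0, _, _ => 0
  | _ + 1, _ + 1, 0, _ => 0
  | 1, 1, 1, p => hat p
  | a + 2, b + 1, c + 1, p =>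
      ∫ t in (0:ℝ)..1, boxN (a + 1) (b + 1) (c + 1) (p.1 - t, p.2)
  | 1, b + 2, c + 1, p =>
      ∫ t in (0:ℝ)..1, boxN 1 (b + 1) (c + 1) (p.1, p.2 - t)
  | 1, 1, c + 2, p =>
      ∫ t in (0:ℝ)..1, boxN 1 1 (c + 1) (p.1 - t, p.2 - t)
  termination_by a b c _ => a + b + c
  decreasing_by all_goals omega

/-- The translate `B_n(· - w)` of the box spline. -/
def trBox (n₁ n₂ n₃ : ℕ) (w : ℤ × ℤ) (p : Pt) : ℝ :=
  boxN n₁ n₂ n₃ (p.1 - (w.1 : ℝ), p.2 - (w.2 : ℝ))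

/-- `Supp_n(△̂)`: lattice translates of `B_n` that do not vanish identically
on the triangle `T`. -/
def activeSet (n₁ n₂ n₃ : ℕ) (T : Tri) : Set (ℤ × ℤ) :=
  {w | ¬ ∀ p ∈ T.toSet, trBox n₁ n₂ n₃ w p = 0}

/-- `c` is the coefficient vector of the polynomial `q` with respect to the
active box-spline translates on `T`:  `q|_T = Σ_β λ_T^β(q)·β|_T`. -/
def Represents (n₁ n₂ n₃ : ℕ) (T : Tri) (q : BPoly) (c : (ℤ × ℤ) →₀ ℝ) : Prop :=
  ↑c.support ⊆ activeSet n₁ n₂ n₃ T ∧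
    ∀ p ∈ T.toSet, evalP q p = c.sum fun w a => a * trBox n₁ n₂ n₃ w p

/-- `V_n` (relative to the triangle `T`): polynomials whose restriction to `T`
is a linear combination of the active box-spline translates on `T`. -/
def VSpace (n₁ n₂ n₃ : ℕ) (T : Tri) : Set BPoly :=
  {q | ∃ c, Represents n₁ n₂ n₃ T q c}

/-!
The derivative of `B_n` along `e₁` or `e₂` is a backward difference of translates of `B_(n - eᵢ)`,
so differentiating `f` lowers `nᵢ`, replaces the coefficients by their backward differences in
direction `eᵢ`, and costs one factor `x - y`. By induction the differences vanish, hence the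
coefficients of the translates reaching the open edge from `(0, 0)` to `(1, 1)` are constant along
lines parallel to `eᵢ`. The translates of `B_n` along such a line add up to a univariate cardinal
B-spline in the other coordinate, so on the edge `f` is a univariate B-spline series; it is
zero because `x - y` divides `f`, and univariate B-splines are linearly independent on `(0, 1)`.
-/

section DirectionalAverage

variable {E : Type*} [NormedAddCommGroup E] [NormedSpace ℝ E]

/-- The directional average of `g` along the segment from `p - e` to `p`, i.e. the convolution
step of the box spline recursion, on an arbitrary normed space so that it covers univariate
B-splines as well. -/
def dirAvg (e : E) (g : E → ℝ) (p : E) : ℝ := ∫ t in (0 : ℝ)..1, g (p - t • e)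

theorem dirAvg_zero (g : E → ℝ) : dirAvg 0 g = g := by
  funext p
  simp [dirAvg]

theorem continuous_dirAvg (e : E) {g : E → ℝ} (hg : Continuous g) : Continuous (dirAvg e g) :=
  intervalIntegral.continuous_parametric_intervalIntegral_of_continuous' (by fun_prop) 0 1

theorem hasLineDerivAt_dirAvg {e : E} {g : E → ℝ} (hg : Continuous g) (p : E) :
    HasLineDerivAt ℝ (dirAvg e g) (g p - g (p - e)) p e := by
  have hline : Continuous fun τ : ℝ => g (p + τ • e) := by fun_prop
  have hprim (s : ℝ) :
      HasDerivAt (fun s => ∫ τ in (0 : ℝ)..s, g (p + τ • e)) (g (p + s • e)) s :=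
    intervalIntegral.integral_hasDerivAt_right (hline.intervalIntegrable _ _)
      (hline.stronglyMeasurableAtFilter _ _) hline.continuousAt
  have havg : (fun s : ℝ => dirAvg e g (p + s • e)) = fun s =>
      (∫ τ in (0 : ℝ)..s, g (p + τ • e)) - ∫ τ in (0 : ℝ)..(s - 1), g (p + τ • e) := by
    funext s
    rw [intervalIntegral.integral_interval_sub_left (hline.intervalIntegrable _ _)
      (hline.intervalIntegrable _ _)]
    simpa [dirAvg, sub_smul, add_sub_assoc] using
      intervalIntegral.integral_comp_sub_left (a := 0) (b := 1) (fun τ => g (p + τ • e)) s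
  have hshift := HasDerivAt.comp_sub_const (0 : ℝ) 1 (hprim (0 - 1))
  unfold HasLineDerivAt
  rw [havg]
  simpa [sub_eq_add_neg] using (hprim 0).fun_sub hshift

/-- `g` vanishes outside the open strip `α < ℓ < β`. -/
def VanishesOutsideStrip (ℓ : E →ₗ[ℝ] ℝ) (α β : ℝ) (g : E → ℝ) : Prop :=
  ∀ p, ℓ p ∉ Ioo α β → g p = 0

theorem VanishesOutsideStrip.dirAvg {ℓ : E →ₗ[ℝ] ℝ} {α β α' β' : ℝ} {g : E → ℝ}
    (hg : VanishesOutsideStrip ℓ α β g) (e : E) (hα : α' ≤ min α (α + ℓ e))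
    (hβ : max β (β + ℓ e) ≤ β') : VanishesOutsideStrip ℓ α' β' (dirAvg e g) := by
  intro p hp
  refine intervalIntegral.integral_zero_ae (.of_forall fun t ht => hg _ fun hmem => hp ?_)
  rw [uIoc_of_le zero_le_one] at ht
  obtain ⟨ht0, ht1⟩ := ht
  simp only [map_sub, map_smul, smul_eq_mul, mem_Ioo, le_min_iff, max_le_iff] at *
  constructor <;> rcases le_total 0 (ℓ e) with he | he <;> nlinarith

/-- The translates of `g` by the integer multiples of `u` add up to `h ∘ μ`. Here `ℓ` is a
coordinate along `u`, and `g` is understood to vanish outside `0 ≤ ℓ ≤ M`, so a finite set of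
integers that contains every `a` with `0 ≤ ℓ p - a ≤ M` suffices to sum at `p`. -/
def HasTranslateSum (u : E) (ℓ μ : E →ₗ[ℝ] ℝ) (M : ℝ) (g : E → ℝ) (h : ℝ → ℝ) : Prop :=
  ∀ (p : E) (s : Finset ℤ), (∀ a : ℤ, ℓ p - a ∈ Icc 0 M → a ∈ s) →
    ∑ a ∈ s, g (p - (a : ℝ) • u) = h (μ p)

theorem hasTranslateSum_two {u : E} {ℓ μ : E →ₗ[ℝ] ℝ} {g : E → ℝ} {h : ℝ → ℝ}
    (hℓ : ℓ u = 1) (hμ : μ u = 0) (hg : VanishesOutsideStrip ℓ 0 2 g)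
    (hpair : ∀ p, ℓ p ∈ Ioc 0 1 → g p + g (p + u) = h (μ p)) :
    HasTranslateSum u ℓ μ 2 g h := by
  intro p s hs
  set n : ℤ := ⌈ℓ p⌉ - 1
  have hn : ℓ p - n ∈ Ioc 0 1 := by
    have := Int.ceil_lt_add_one (ℓ p)
    have := Int.le_ceil (ℓ p)
    constructor <;> push_cast [n] <;> linarith
  have hsub : ({n, n - 1} : Finset ℤ) ⊆ s := by
    simp only [Finset.insert_subset_iff, Finset.singleton_subset_iff]
    constructor <;> refine hs _ ⟨?_, ?_⟩ <;> push_cast <;> linarith [hn.1, hn.2]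
  have hzero : ∀ a ∈ s, a ∉ ({n, n - 1} : Finset ℤ) → g (p - (a : ℝ) • u) = 0 := by
    intro a _ ha
    refine hg _ fun hmem => ha ?_
    simp only [map_sub, map_smul, hℓ, smul_eq_mul, mul_one, mem_Ioo] at hmem
    have hlow : n - 2 < a := by exact_mod_cast (by linarith [hn.1] : (n : ℝ) - 2 < a)
    have hhigh : a < n + 1 := by exact_mod_cast (by linarith [hn.2] : (a : ℝ) < n + 1)
    simp only [Finset.mem_insert, Finset.mem_singleton]
    lia
  have hsplit : p - ((n - 1 : ℤ) : ℝ) • u = p - (n : ℝ) • u + u := by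
    push_cast
    module
  rw [← Finset.sum_subset hsub hzero, Finset.sum_pair (by lia), hsplit,
    hpair _ (by simpa [hℓ] using hn)]
  simp [hμ]

theorem HasTranslateSum.dirAvg {u : E} {ℓ μ : E →ₗ[ℝ] ℝ} {M M' : ℝ} {g : E → ℝ} {h : ℝ → ℝ}
    (hsum : HasTranslateSum u ℓ μ M g h) (hg : Continuous g) {e : E} (he : 0 ≤ ℓ e)
    (hM : M + ℓ e ≤ M') : HasTranslateSum u ℓ μ M' (dirAvg e g) (dirAvg (μ e) h) := by
  intro p s hs
  calc ∑ a ∈ s, ∫ t in (0 : ℝ)..1, g (p - (a : ℝ) • u - t • e)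
      = ∫ t in (0 : ℝ)..1, ∑ a ∈ s, g (p - (a : ℝ) • u - t • e) := by
        refine (intervalIntegral.integral_finsetSum fun a _ => ?_).symm
        exact Continuous.intervalIntegrable (by fun_prop) 0 1
    _ = ∫ t in (0 : ℝ)..1, h (μ p - t • μ e) := by
        refine intervalIntegral.integral_congr fun t ht => ?_
        rw [uIcc_of_le zero_le_one] at ht
        simp only [sub_right_comm p _ (t • e)]
        rw [hsum (p - t • e) s fun a ha => hs a ?_, map_sub, map_smul]
        simp only [map_sub, map_smul, smul_eq_mul, mem_Icc] at ha ⊢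
        constructor <;> nlinarith [ht.1, ht.2]

end DirectionalAverage

section LatticeSum

variable {E L : Type*} [AddCommGroup L]

/-- The combination `∑ c w • g (· - w)` of lattice translates of `g`, where `ι` embeds the
lattice `L` in `E`. -/
def latticeSum [AddCommGroup E] (ι : L →+ E) (c : L →₀ ℝ) (g : E → ℝ) (p : E) : ℝ :=
  c.sum fun w r => r * g (p - ι w)

theorem latticeSum_eq_sum [AddCommGroup E] {ι : L →+ E} {g : E → ℝ} {p : E} {s : Finset L}
    (hs : ∀ w, g (p - ι w) ≠ 0 → w ∈ s) (c : L →₀ ℝ) :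
    latticeSum ι c g p = ∑ w ∈ s, c w * g (p - ι w) := by
  refine Finset.sum_congr_of_eq_on_inter (fun w _ hw => ?_) (fun w _ hw => ?_) fun _ _ _ => rfl
  · simp only [not_imp_comm.1 (hs w) hw, mul_zero]
  · simp only [Finsupp.notMem_support_iff.1 hw, zero_mul]

/-- The backward difference `w ↦ c w - c (w - e)` of a coefficient vector. -/
def backwardDiff (e : L) (c : L →₀ ℝ) : L →₀ ℝ :=
  c - Finsupp.mapDomain (· + e) c

theorem backwardDiff_apply (e : L) (c : L →₀ ℝ) (w : L) :
    backwardDiff e c w = c w - c (w - e) := by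
  have hshift := Finsupp.mapDomain_apply (add_left_injective e) c (w - e)
  rw [sub_add_cancel] at hshift
  rw [backwardDiff, Finsupp.sub_apply, hshift]

theorem continuous_latticeSum [AddCommGroup E] [TopologicalSpace E] [ContinuousSub E]
    (ι : L →+ E) (c : L →₀ ℝ) {g : E → ℝ} (hg : Continuous g) : Continuous (latticeSum ι c g) :=
  continuous_finsetSum _ fun w _ => by fun_prop

variable [NormedAddCommGroup E] [NormedSpace ℝ E]

theorem hasLineDerivAt_latticeSum_dirAvg (ι : L →+ E) (e : L) (c : L →₀ ℝ) {g : E → ℝ}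
    (hg : Continuous g) (p : E) :
    HasLineDerivAt ℝ (latticeSum ι c (dirAvg (ι e) g)) (latticeSum ι (backwardDiff e c) g p)
      p (ι e) := by
  have htranslate (w : L) : HasDerivAt (fun t : ℝ => dirAvg (ι e) g (p + t • ι e - ι w))
      (g (p - ι w) - g (p - ι (w + e))) 0 := by
    simpa only [HasLineDerivAt, sub_add_eq_add_sub, sub_sub, ← map_add] using
      hasLineDerivAt_dirAvg (e := ι e) hg (p - ι w)
  have hdiff : latticeSum ι (backwardDiff e c) g p =
      c.sum fun w r => r * (g (p - ι w) - g (p - ι (w + e))) := by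
    simp only [latticeSum, backwardDiff]
    rw [Finsupp.sum_sub_index fun _ _ _ => sub_mul _ _ _,
      Finsupp.sum_mapDomain_index (fun _ => zero_mul _) fun _ _ _ => add_mul _ _ _]
    simp only [mul_sub, Finsupp.sum_sub]
  rw [hdiff]
  exact HasDerivAt.fun_sum fun w _ => (htranslate w).const_mul (c w)

theorem eqOn_latticeSum_backwardDiff {ι : L →+ E} {e : L} {c : L →₀ ℝ} {g F F' : E → ℝ}
    {U : Set E} (hU : IsOpen U) (hg : Continuous g)
    (hF : ∀ p, HasLineDerivAt ℝ F (F' p) p (ι e))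
    (heq : EqOn F (latticeSum ι c (dirAvg (ι e) g)) U) :
    EqOn F' (latticeSum ι (backwardDiff e c) g) U := by
  intro p hp
  refine (hF p).unique ((hasLineDerivAt_latticeSum_dirAvg ι e c hg p).congr_of_eventuallyEq ?_)
  exact heq.eventuallyEq_of_mem (hU.mem_nhds hp)

end LatticeSum

theorem eq_right_of_forall_eq_sub_one {α : Type*} {v : ℤ → α} {l u : ℤ}
    (h : ∀ a, l < a → a ≤ u → v a = v (a - 1)) {a : ℤ} (hla : l ≤ a) (hau : a ≤ u) :
    v a = v u := by
  induction u, hau using Int.leInduction with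
  | base => rfl
  | succ u hau ih =>
    rw [ih fun b hlb hbu => h b hlb (by lia), h (u + 1) (by lia) le_rfl, add_sub_cancel_right]

theorem mem_Icc_of_sub_mem_Icc {t r : ℝ} (ht : t ∈ Ioo 0 1) {a n : ℤ} (hr : r ≤ n + 1)
    (ha : t - a ∈ Icc 0 r) : a ∈ Icc (-n) 0 := by
  obtain ⟨⟨ht0, ht1⟩, hlow, hhigh⟩ := And.intro ht ha
  have : a < 1 := by exact_mod_cast (by linarith : (a : ℝ) < 1)
  have : -(n + 1) < a := by exact_mod_cast (by linarith : -(n + 1 : ℝ) < a)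
  constructor <;> lia

section CardinalBSpline

/-- The univariate hat function on `[0, 2]`, i.e. the cardinal linear B-spline. -/
def tent (y : ℝ) : ℝ := max 0 (min y (2 - y))

/-- The univariate cardinal B-spline of degree `m + 1`, supported on `[0, m + 2]`. -/
def cardinalBSpline (m : ℕ) : ℝ → ℝ := (dirAvg (1 : ℝ))^[m] tent

theorem cardinalBSpline_succ (m : ℕ) :
    cardinalBSpline (m + 1) = dirAvg 1 (cardinalBSpline m) :=
  iterate_succ_apply' _ _ _

theorem continuous_cardinalBSpline (m : ℕ) : Continuous (cardinalBSpline m) := by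
  induction m with
  | zero =>
    change Continuous fun y : ℝ => max 0 (min y (2 - y))
    fun_prop
  | succ m ih => exact cardinalBSpline_succ m ▸ continuous_dirAvg 1 ih

theorem vanishesOutsideStrip_cardinalBSpline (m : ℕ) :
    VanishesOutsideStrip LinearMap.id 0 (m + 2) (cardinalBSpline m) := by
  induction m with
  | zero =>
    intro y hy
    simp only [LinearMap.id_apply, mem_Ioo, Nat.cast_zero] at hy
    change max 0 (min y (2 - y)) = 0
    grind
  | succ m ih =>
    rw [cardinalBSpline_succ]
    refine ih.dirAvg 1 ?_ ?_ <;> (push_cast [LinearMap.id_apply]; grind)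

theorem hasTranslateSum_cardinalBSpline (m : ℕ) :
    HasTranslateSum 1 LinearMap.id 0 (m + 2) (cardinalBSpline m) 1 := by
  induction m with
  | zero =>
    simp only [Nat.cast_zero, zero_add]
    refine hasTranslateSum_two rfl rfl ?_ ?_
    · simpa using vanishesOutsideStrip_cardinalBSpline 0
    · rintro y ⟨hy0, hy1⟩
      change max 0 (min y (2 - y)) + max 0 (min (y + 1) (2 - (y + 1))) = 1
      simp only [LinearMap.id_apply] at hy0 hy1
      grind
  | succ m ih =>
    have := ih.dirAvg (continuous_cardinalBSpline m) (e := 1) (M' := (m + 1 : ℕ) + 2)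
      zero_le_one (by push_cast [LinearMap.id_apply]; linarith)
    rwa [LinearMap.zero_apply, dirAvg_zero, ← cardinalBSpline_succ] at this

theorem mem_Icc_of_cardinalBSpline_ne_zero {m : ℕ} {t : ℝ} (ht : t ∈ Ioo 0 1) {b : ℤ}
    (hb : cardinalBSpline m (t - Int.castAddHom ℝ b) ≠ 0) :
    b ∈ Finset.Icc (-(m + 1 : ℤ)) 0 := by
  have hmem := not_imp_comm.1 (vanishesOutsideStrip_cardinalBSpline m _) hb
  exact Finset.mem_Icc.2
    (mem_Icc_of_sub_mem_Icc ht (by push_cast; linarith) (Ioo_subset_Icc_self hmem))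

theorem eq_zero_of_latticeSum_tent_eq_zero {c : ℤ →₀ ℝ}
    (hc : EqOn 0 (latticeSum (Int.castAddHom ℝ) c tent) (Ioo 0 1)) {b : ℤ}
    (hb : b ∈ Icc (-1) 0) : c b = 0 := by
  have hvalue : ∀ t ∈ Ioo (0 : ℝ) 1, c (-1) * (1 - t) + c 0 * t = 0 := by
    intro t ht
    have hsum := hc ht
    have hactive (b : ℤ) (hb : tent (t - Int.castAddHom ℝ b) ≠ 0) : b ∈ Finset.Icc (-1) 0 :=
      mem_Icc_of_cardinalBSpline_ne_zero (m := 0) ht hb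
    rw [latticeSum_eq_sum hactive, show Finset.Icc (-1 : ℤ) 0 = {-1, 0} by rfl] at hsum
    have h0 : tent t = t := by have := ht.1; have := ht.2; grind [tent]
    have h1 : tent (t + 1) = 1 - t := by have := ht.1; have := ht.2; grind [tent]
    simpa [h0, h1] using hsum.symm
  have hthird := hvalue (1 / 3) (by norm_num)
  have htwoThirds := hvalue (2 / 3) (by norm_num)
  obtain ⟨hlow, hhigh⟩ := hb
  interval_cases b <;> linarith

theorem eq_zero_of_latticeSum_cardinalBSpline_eq_zero {m : ℕ} {c : ℤ →₀ ℝ}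
    (hc : EqOn 0 (latticeSum (Int.castAddHom ℝ) c (cardinalBSpline m)) (Ioo 0 1)) {b : ℤ}
    (hb : b ∈ Icc (-(m + 1 : ℤ)) 0) : c b = 0 := by
  induction m generalizing c b with
  | zero => exact eq_zero_of_latticeSum_tent_eq_zero hc (by simpa using hb)
  | succ m ih =>
    have hdiff : EqOn 0 (latticeSum (Int.castAddHom ℝ) (backwardDiff 1 c) (cardinalBSpline m))
        (Ioo 0 1) := by
      refine eqOn_latticeSum_backwardDiff (F := 0) isOpen_Ioo (continuous_cardinalBSpline m)
        (fun _ => hasDerivAt_const _ _) ?_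
      simpa [cardinalBSpline_succ] using hc
    have hconst {b : ℤ} (hb : b ∈ Icc (-((m + 1 : ℕ) + 1 : ℤ)) 0) : c b = c 0 := by
      refine eq_right_of_forall_eq_sub_one (fun a hla hau => ?_) hb.1 hb.2
      have := ih hdiff (b := a) ⟨by push_cast at hla; lia, hau⟩
      rwa [backwardDiff_apply, sub_eq_zero] at this
    have hhalf : (1 / 2 : ℝ) ∈ Ioo 0 1 := by norm_num
    have hunity : ∑ b ∈ Finset.Icc (-((m + 1 : ℕ) + 1 : ℤ)) 0,
        cardinalBSpline (m + 1) (1 / 2 - Int.castAddHom ℝ b) = 1 := by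
      have := hasTranslateSum_cardinalBSpline (m + 1) (1 / 2)
        (Finset.Icc (-((m + 1 : ℕ) + 1 : ℤ)) 0) fun a ha => Finset.mem_Icc.2
          (mem_Icc_of_sub_mem_Icc hhalf (by push_cast; linarith) ha)
      simpa only [smul_eq_mul, mul_one, Pi.one_apply, Int.coe_castAddHom] using this
    have hsum := hc hhalf
    rw [latticeSum_eq_sum fun b hb => mem_Icc_of_cardinalBSpline_ne_zero hhalf hb,
      Finset.sum_congr rfl fun b hb => by rw [hconst (Finset.mem_Icc.1 hb)], ← Finset.mul_sum,
      hunity, mul_one] at hsum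
    rw [hconst hb, ← hsum, Pi.zero_apply]

end CardinalBSpline

section BoxSpline

theorem boxN_add_two_left (i j k : ℕ) :
    boxN (i + 2) (j + 1) (k + 1) = dirAvg (1, 0) (boxN (i + 1) (j + 1) (k + 1)) := by
  funext p
  rw [boxN]
  simp [dirAvg, Prod.sub_def]

theorem boxN_one_add_two (j k : ℕ) :
    boxN 1 (j + 2) (k + 1) = dirAvg (0, 1) (boxN 1 (j + 1) (k + 1)) := by
  funext p
  rw [boxN]
  simp [dirAvg, Prod.sub_def]

theorem boxN_one_one_add_two (k : ℕ) : boxN 1 1 (k + 2) = dirAvg (1, 1) (boxN 1 1 (k + 1)) := by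
  funext p
  rw [boxN]
  simp [dirAvg, Prod.sub_def]

theorem boxN_one_one_one : boxN 1 1 1 = hat := by
  funext p
  rw [boxN]

theorem continuous_hat : Continuous hat := by
  unfold hat
  fun_prop

theorem boxN_induction {P : ℕ → ℕ → ℕ → (Pt → ℝ) → Prop} (base : P 0 0 0 hat)
    (step₁ : ∀ i j k, P i j k (boxN (i + 1) (j + 1) (k + 1)) →
      P (i + 1) j k (dirAvg (1, 0) (boxN (i + 1) (j + 1) (k + 1))))
    (step₂ : ∀ j k, P 0 j k (boxN 1 (j + 1) (k + 1)) →
      P 0 (j + 1) k (dirAvg (0, 1) (boxN 1 (j + 1) (k + 1))))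
    (step₃ : ∀ k, P 0 0 k (boxN 1 1 (k + 1)) →
      P 0 0 (k + 1) (dirAvg (1, 1) (boxN 1 1 (k + 1)))) (i j k : ℕ) :
    P i j k (boxN (i + 1) (j + 1) (k + 1)) := by
  induction i with
  | succ i ih => exact boxN_add_two_left i j k ▸ step₁ i j k ih
  | zero =>
    induction j with
    | succ j ih => exact boxN_one_add_two j k ▸ step₂ j k ih
    | zero =>
      induction k with
      | succ k ih => exact boxN_one_one_add_two k ▸ step₃ k ih
      | zero => exact boxN_one_one_one ▸ base

theorem continuous_boxN (i j k : ℕ) : Continuous (boxN (i + 1) (j + 1) (k + 1)) :=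
  boxN_induction (P := fun _ _ _ => Continuous) continuous_hat
    (fun _ _ _ => continuous_dirAvg _) (fun _ _ => continuous_dirAvg _)
    (fun _ => continuous_dirAvg _) i j k

theorem vanishesOutsideStrip_fst_boxN (i j k : ℕ) :
    VanishesOutsideStrip (LinearMap.fst ℝ ℝ ℝ) 0 (i + k + 2) (boxN (i + 1) (j + 1) (k + 1)) := by
  refine boxN_induction (P := fun i _ k => VanishesOutsideStrip (LinearMap.fst ℝ ℝ ℝ) 0
    (i + k + 2)) ?_ (fun i j k hg => hg.dirAvg _ ?_ ?_) (fun j k hg => hg.dirAvg _ ?_ ?_)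
    (fun k hg => hg.dirAvg _ ?_ ?_) i j k
  · intro p hp
    simp only [LinearMap.fst_apply, mem_Ioo, Nat.cast_zero] at hp
    simp only [hat]
    grind
  all_goals
    push_cast [LinearMap.fst_apply]
    grind

theorem vanishesOutsideStrip_snd_boxN (i j k : ℕ) :
    VanishesOutsideStrip (LinearMap.snd ℝ ℝ ℝ) 0 (j + k + 2) (boxN (i + 1) (j + 1) (k + 1)) := by
  refine boxN_induction (P := fun _ j k => VanishesOutsideStrip (LinearMap.snd ℝ ℝ ℝ) 0
    (j + k + 2)) ?_ (fun i j k hg => hg.dirAvg _ ?_ ?_) (fun j k hg => hg.dirAvg _ ?_ ?_)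
    (fun k hg => hg.dirAvg _ ?_ ?_) i j k
  · intro p hp
    simp only [LinearMap.snd_apply, mem_Ioo, Nat.cast_zero] at hp
    simp only [hat]
    grind
  all_goals
    push_cast [LinearMap.snd_apply]
    grind

theorem vanishesOutsideStrip_fst_sub_snd_boxN (i j k : ℕ) :
    VanishesOutsideStrip (LinearMap.fst ℝ ℝ ℝ - LinearMap.snd ℝ ℝ ℝ) (-(j + 1)) (i + 1)
      (boxN (i + 1) (j + 1) (k + 1)) := by
  refine boxN_induction (P := fun i j _ => VanishesOutsideStrip
    (LinearMap.fst ℝ ℝ ℝ - LinearMap.snd ℝ ℝ ℝ) (-(j + 1)) (i + 1)) ?_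
    (fun i j k hg => hg.dirAvg _ ?_ ?_) (fun j k hg => hg.dirAvg _ ?_ ?_)
    (fun k hg => hg.dirAvg _ ?_ ?_) i j k
  · intro p hp
    simp only [LinearMap.sub_apply, LinearMap.fst_apply, LinearMap.snd_apply, mem_Ioo,
      Nat.cast_zero] at hp
    simp only [hat]
    grind
  all_goals
    push_cast [LinearMap.sub_apply, LinearMap.fst_apply, LinearMap.snd_apply]
    grind

theorem hasTranslateSum_fst_boxN (i j k : ℕ) :
    HasTranslateSum (1, 0) (LinearMap.fst ℝ ℝ ℝ) (LinearMap.snd ℝ ℝ ℝ) (i + k + 2)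
      (boxN (i + 1) (j + 1) (k + 1)) (cardinalBSpline (j + k)) := by
  refine boxN_induction (P := fun i j k g => HasTranslateSum (1, 0) (LinearMap.fst ℝ ℝ ℝ)
    (LinearMap.snd ℝ ℝ ℝ) (i + k + 2) g (cardinalBSpline (j + k))) ?base
    (fun i j k hsum => ?step₁) (fun j k hsum => ?step₂)
    (fun k hsum => ?step₃) i j k
  case base =>
    have hstrip := vanishesOutsideStrip_fst_boxN 0 0 0
    simp only [Nat.cast_zero, zero_add, boxN_one_one_one] at hstrip ⊢
    refine hasTranslateSum_two (by simp) (by simp) hstrip fun p hp => ?_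
    simp only [LinearMap.fst_apply, mem_Ioc] at hp
    change hat p + hat (p + (1, 0)) = tent p.2
    simp only [hat, tent, Prod.fst_add, Prod.snd_add]
    grind
  case step₁ =>
    have := hsum.dirAvg (continuous_boxN _ _ _) (e := (1, 0)) (M' := (i + 1 : ℕ) + k + 2) (by simp)
      (by push_cast [LinearMap.fst_apply]; linarith)
    simpa only [LinearMap.snd_apply, dirAvg_zero] using this
  case step₂ =>
    have := hsum.dirAvg (continuous_boxN _ _ _) (e := (0, 1)) (M' := (0 : ℕ) + k + 2)
      (by simp) (by simp)
    rwa [LinearMap.snd_apply, ← cardinalBSpline_succ, Nat.add_right_comm] at this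
  case step₃ =>
    have := hsum.dirAvg (continuous_boxN _ _ _) (e := (1, 1))
      (M' := (0 : ℕ) + (k + 1 : ℕ) + 2) (by simp) (by push_cast [LinearMap.fst_apply]; linarith)
    rwa [LinearMap.snd_apply, ← cardinalBSpline_succ] at this

theorem hasTranslateSum_snd_boxN (i j k : ℕ) :
    HasTranslateSum (0, 1) (LinearMap.snd ℝ ℝ ℝ) (LinearMap.fst ℝ ℝ ℝ) (j + k + 2)
      (boxN (i + 1) (j + 1) (k + 1)) (cardinalBSpline (i + k)) := by
  refine boxN_induction (P := fun i j k g => HasTranslateSum (0, 1) (LinearMap.snd ℝ ℝ ℝ)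
    (LinearMap.fst ℝ ℝ ℝ) (j + k + 2) g (cardinalBSpline (i + k))) ?base
    (fun i j k hsum => ?step₁) (fun j k hsum => ?step₂)
    (fun k hsum => ?step₃) i j k
  case base =>
    have hstrip := vanishesOutsideStrip_snd_boxN 0 0 0
    simp only [Nat.cast_zero, zero_add, boxN_one_one_one] at hstrip ⊢
    refine hasTranslateSum_two (by simp) (by simp) hstrip fun p hp => ?_
    simp only [LinearMap.snd_apply, mem_Ioc] at hp
    change hat p + hat (p + (0, 1)) = tent p.1
    simp only [hat, tent, Prod.fst_add, Prod.snd_add]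
    grind
  case step₁ =>
    have := hsum.dirAvg (continuous_boxN _ _ _) (e := (1, 0)) (M' := j + k + 2) (by simp) (by simp)
    rwa [LinearMap.fst_apply, ← cardinalBSpline_succ, Nat.add_right_comm] at this
  case step₂ =>
    have := hsum.dirAvg (continuous_boxN _ _ _) (e := (0, 1)) (M' := (j + 1 : ℕ) + k + 2) (by simp)
      (by push_cast [LinearMap.snd_apply]; linarith)
    simpa only [LinearMap.fst_apply, dirAvg_zero] using this
  case step₃ =>
    have := hsum.dirAvg (continuous_boxN _ _ _) (e := (1, 1))
      (M' := (0 : ℕ) + (k + 1 : ℕ) + 2) (by simp) (by push_cast [LinearMap.snd_apply]; linarith)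
    rwa [LinearMap.fst_apply, ← cardinalBSpline_succ] at this

end BoxSpline

section EdgeIndices

/-- The inclusion of the lattice `ℤ²` in the plane. -/
def latticeEmb : ℤ × ℤ →+ Pt := (Int.castAddHom ℝ).prodMap (Int.castAddHom ℝ)

/-- The translates of `B_(i+1,j+1,k+1)` that reach the open edge from `(0, 0)` to `(1, 1)`: the
integer points of the hexagon cut out by the three strips containing the support. -/
def edgeIndices (i j k : ℕ) : Set (ℤ × ℤ) :=
  {w | w.1 ∈ Icc (-(i + k + 1 : ℤ)) 0 ∧ w.2 ∈ Icc (-(j + k + 1 : ℤ)) 0 ∧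
    w.2 - w.1 ∈ Icc (-(j : ℤ)) i}

variable {i j k : ℕ}

theorem sub_mem_strips_of_boxN_ne_zero {p : Pt} {w : ℤ × ℤ}
    (h : boxN (i + 1) (j + 1) (k + 1) (p - latticeEmb w) ≠ 0) :
    p.1 - w.1 ∈ Ioo (0 : ℝ) (i + k + 2) ∧ p.2 - w.2 ∈ Ioo (0 : ℝ) (j + k + 2) ∧
      p.1 - w.1 - (p.2 - w.2) ∈ Ioo (-(j + 1) : ℝ) (i + 1) := by
  have hdiff := not_imp_comm.1 (vanishesOutsideStrip_fst_sub_snd_boxN i j k _) h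
  rw [LinearMap.sub_apply] at hdiff
  exact ⟨not_imp_comm.1 (vanishesOutsideStrip_fst_boxN i j k (p - latticeEmb w)) h,
    not_imp_comm.1 (vanishesOutsideStrip_snd_boxN i j k (p - latticeEmb w)) h, hdiff⟩

theorem mem_edgeIndices_of_boxN_ne_zero {t : ℝ} (ht : t ∈ Ioo 0 1) {w : ℤ × ℤ}
    (h : boxN (i + 1) (j + 1) (k + 1) ((t, t) - latticeEmb w) ≠ 0) : w ∈ edgeIndices i j k := by
  obtain ⟨hfst, hsnd, hdiff⟩ := sub_mem_strips_of_boxN_ne_zero h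
  refine ⟨mem_Icc_of_sub_mem_Icc ht (by push_cast; linarith) (Ioo_subset_Icc_self hfst),
    mem_Icc_of_sub_mem_Icc ht (by push_cast; linarith) (Ioo_subset_Icc_self hsnd), ?_⟩
  rw [sub_sub_sub_cancel_left] at hdiff
  have hlow : -(j + 1 : ℤ) < w.2 - w.1 := by exact_mod_cast hdiff.1
  have hhigh : w.2 - w.1 < (i + 1 : ℤ) := by exact_mod_cast hdiff.2
  constructor <;> lia

theorem mem_edgeIndices_of_active {w : ℤ × ℤ}
    (hlower : w ∈ activeSet (i + 1) (j + 1) (k + 1) ⟨(0, 0), false⟩)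
    (hupper : w ∈ activeSet (i + 1) (j + 1) (k + 1) ⟨(0, 0), true⟩) : w ∈ edgeIndices i j k := by
  simp only [activeSet, mem_ofPred_eq, not_forall, Tri.toSet, Bool.false_eq_true, if_false,
    if_true, Int.cast_zero, sub_zero, zero_add] at hlower hupper
  obtain ⟨⟨x, y⟩, ⟨hy0, hyx, hx1⟩, hp⟩ := hlower
  obtain ⟨⟨x', y'⟩, ⟨-, hxy', -⟩, hp'⟩ := hupper
  obtain ⟨hfst, hsnd, -, hhigh⟩ := sub_mem_strips_of_boxN_ne_zero hp
  obtain ⟨-, -, hlow, -⟩ := sub_mem_strips_of_boxN_ne_zero hp'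
  dsimp only at *
  refine ⟨mem_Icc_of_sub_mem_Icc ⟨hy0.trans hyx, hx1⟩ (by push_cast; linarith)
      (Ioo_subset_Icc_self hfst),
    mem_Icc_of_sub_mem_Icc ⟨hy0, hyx.trans hx1⟩ (by push_cast; linarith)
      (Ioo_subset_Icc_self hsnd), ?_⟩
  have hhigh' : w.2 - w.1 < (i + 1 : ℤ) := by
    exact_mod_cast (by linarith : (w.2 - w.1 : ℝ) < i + 1)
  have hlow' : -(j + 1 : ℤ) < w.2 - w.1 := by
    exact_mod_cast (by linarith : -(j + 1 : ℝ) < w.2 - w.1)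
  constructor <;> lia

theorem mem_edgeIndices_of_sub_fst_mem {w : ℤ × ℤ}
    (hw : w ∈ edgeIndices (i + 1) j k) (hw' : w - (1, 0) ∈ edgeIndices (i + 1) j k) :
    w ∈ edgeIndices i j k := by
  simp only [edgeIndices, mem_ofPred_eq, mem_Icc, Prod.fst_sub, Prod.snd_sub] at *
  lia

theorem mem_edgeIndices_of_sub_snd_mem {w : ℤ × ℤ}
    (hw : w ∈ edgeIndices i (j + 1) k) (hw' : w - (0, 1) ∈ edgeIndices i (j + 1) k) :
    w ∈ edgeIndices i j k := by
  simp only [edgeIndices, mem_ofPred_eq, mem_Icc, Prod.fst_sub, Prod.snd_sub] at *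
  lia

theorem latticeSum_boxN_diag {c : ℤ × ℤ →₀ ℝ} {a : ℤ × ℤ → ℝ}
    (hc : ∀ w ∈ edgeIndices i j k, c w = a w) {t : ℝ} (ht : t ∈ Ioo 0 1) :
    latticeSum latticeEmb c (boxN (i + 1) (j + 1) (k + 1)) (t, t) =
      ∑ w ∈ Finset.Icc (-(i + k + 1 : ℤ)) 0 ×ˢ Finset.Icc (-(j + k + 1 : ℤ)) 0,
        a w * boxN (i + 1) (j + 1) (k + 1) ((t, t) - latticeEmb w) := by
  have hactive (w : ℤ × ℤ) (hw : boxN (i + 1) (j + 1) (k + 1) ((t, t) - latticeEmb w) ≠ 0) :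
      w ∈ Finset.Icc (-(i + k + 1 : ℤ)) 0 ×ˢ Finset.Icc (-(j + k + 1 : ℤ)) 0 :=
    have hmem := mem_edgeIndices_of_boxN_ne_zero ht hw
    Finset.mem_product.2 ⟨Finset.mem_Icc.2 hmem.1, Finset.mem_Icc.2 hmem.2.1⟩
  rw [latticeSum_eq_sum hactive]
  refine Finset.sum_congr rfl fun w _ => ?_
  by_cases hw : boxN (i + 1) (j + 1) (k + 1) ((t, t) - latticeEmb w) = 0
  · rw [hw, mul_zero, mul_zero]
  · rw [hc w (mem_edgeIndices_of_boxN_ne_zero ht hw)]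

theorem latticeSum_boxN_diag_of_row_const {c : ℤ × ℤ →₀ ℝ} {r : ℤ →₀ ℝ}
    (hc : ∀ w ∈ edgeIndices i j k, c w = r w.2) {t : ℝ} (ht : t ∈ Ioo 0 1) :
    latticeSum latticeEmb c (boxN (i + 1) (j + 1) (k + 1)) (t, t) =
      latticeSum (Int.castAddHom ℝ) r (cardinalBSpline (j + k)) t := by
  have hrow (b : ℤ) : ∑ a ∈ Finset.Icc (-(i + k + 1 : ℤ)) 0,
      boxN (i + 1) (j + 1) (k + 1) ((t, t) - latticeEmb (a, b)) =
        cardinalBSpline (j + k) (t - Int.castAddHom ℝ b) := by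
    have := hasTranslateSum_fst_boxN i j k (t, t - b) (Finset.Icc (-(i + k + 1 : ℤ)) 0)
      fun a ha => Finset.mem_Icc.2 (mem_Icc_of_sub_mem_Icc ht (by push_cast; linarith) ha)
    simpa [latticeEmb] using this
  rw [latticeSum_boxN_diag hc ht, Finset.sum_product_right,
    latticeSum_eq_sum fun b hb => mem_Icc_of_cardinalBSpline_ne_zero ht hb, Nat.cast_add]
  simp only [← Finset.mul_sum, hrow]

theorem latticeSum_boxN_diag_of_col_const {c : ℤ × ℤ →₀ ℝ} {r : ℤ →₀ ℝ}
    (hc : ∀ w ∈ edgeIndices i j k, c w = r w.1) {t : ℝ} (ht : t ∈ Ioo 0 1) :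
    latticeSum latticeEmb c (boxN (i + 1) (j + 1) (k + 1)) (t, t) =
      latticeSum (Int.castAddHom ℝ) r (cardinalBSpline (i + k)) t := by
  have hcol (a : ℤ) : ∑ b ∈ Finset.Icc (-(j + k + 1 : ℤ)) 0,
      boxN (i + 1) (j + 1) (k + 1) ((t, t) - latticeEmb (a, b)) =
        cardinalBSpline (i + k) (t - Int.castAddHom ℝ a) := by
    have := hasTranslateSum_snd_boxN i j k (t - a, t) (Finset.Icc (-(j + k + 1 : ℤ)) 0)
      fun b hb => Finset.mem_Icc.2 (mem_Icc_of_sub_mem_Icc ht (by push_cast; linarith) hb)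
    simpa [latticeEmb] using this
  rw [latticeSum_boxN_diag hc ht, Finset.sum_product,
    latticeSum_eq_sum fun a ha => mem_Icc_of_cardinalBSpline_ne_zero ht ha, Nat.cast_add]
  simp only [← Finset.mul_sum, hcol]

theorem coeff_eq_zero_of_eq_sub_fst {c : ℤ × ℤ →₀ ℝ}
    (hdiag : ∀ t ∈ Ioo (0 : ℝ) 1,
      latticeSum latticeEmb c (boxN (i + 1) (j + 1) (k + 1)) (t, t) = 0)
    (hdiff : ∀ w ∈ edgeIndices i j k, w - (1, 0) ∈ edgeIndices i j k → c w = c (w - (1, 0)))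
    {w : ℤ × ℤ} (hw : w ∈ edgeIndices i j k) : c w = 0 := by
  let rowEnd (b : ℤ) : ℤ × ℤ := (min 0 (b + j), b)
  have hinj : Injective rowEnd := fun b b' h => congrArg Prod.snd h
  let r : ℤ →₀ ℝ := c.comapDomain rowEnd hinj.injOn
  have hconst : ∀ w ∈ edgeIndices i j k, c w = r w.2 := by
    rintro ⟨a, b⟩ ⟨⟨ha, ha0⟩, hb, hlow, hhigh⟩
    refine eq_right_of_forall_eq_sub_one (v := fun a => c (a, b)) (fun a' hla hau => ?_) le_rfl
      (le_min ha0 (by lia))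
    have hdiff' := hdiff (a', b)
    simp only [edgeIndices, mem_ofPred_eq, mem_Icc, Prod.mk_sub_mk, sub_zero] at *
    exact hdiff' (by lia) (by lia)
  have hr : EqOn 0 (latticeSum (Int.castAddHom ℝ) r (cardinalBSpline (j + k))) (Ioo 0 1) :=
    fun t ht => (hdiag t ht).symm.trans (latticeSum_boxN_diag_of_row_const hconst ht)
  rw [hconst w hw]
  exact eq_zero_of_latticeSum_cardinalBSpline_eq_zero hr (by exact_mod_cast hw.2.1)

theorem coeff_eq_zero_of_eq_sub_snd {c : ℤ × ℤ →₀ ℝ}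
    (hdiag : ∀ t ∈ Ioo (0 : ℝ) 1,
      latticeSum latticeEmb c (boxN (i + 1) (j + 1) (k + 1)) (t, t) = 0)
    (hdiff : ∀ w ∈ edgeIndices i j k, w - (0, 1) ∈ edgeIndices i j k → c w = c (w - (0, 1)))
    {w : ℤ × ℤ} (hw : w ∈ edgeIndices i j k) : c w = 0 := by
  let colEnd (a : ℤ) : ℤ × ℤ := (a, min 0 (a + i))
  have hinj : Injective colEnd := fun a a' h => congrArg Prod.fst h
  let r : ℤ →₀ ℝ := c.comapDomain colEnd hinj.injOn
  have hconst : ∀ w ∈ edgeIndices i j k, c w = r w.1 := by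
    rintro ⟨a, b⟩ ⟨ha, ⟨hb, hb0⟩, hlow, hhigh⟩
    refine eq_right_of_forall_eq_sub_one (v := fun b => c (a, b)) (fun b' hlb hbu => ?_) le_rfl
      (le_min hb0 (by lia))
    have hdiff' := hdiff (a, b')
    simp only [edgeIndices, mem_ofPred_eq, mem_Icc, Prod.mk_sub_mk, sub_zero] at *
    exact hdiff' (by lia) (by lia)
  have hr : EqOn 0 (latticeSum (Int.castAddHom ℝ) r (cardinalBSpline (i + k))) (Ioo 0 1) :=
    fun t ht => (hdiag t ht).symm.trans (latticeSum_boxN_diag_of_col_const hconst ht)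
  rw [hconst w hw]
  exact eq_zero_of_latticeSum_cardinalBSpline_eq_zero hr (by exact_mod_cast hw.1)

end EdgeIndices

section Divisibility

theorem pow_dvd_derivation_of_pow_succ_dvd {R A : Type*} [CommSemiring R] [CommSemiring A]
    [Algebra R A] (D : Derivation R A A) {a f : A} {m : ℕ} (h : a ^ (m + 1) ∣ f) :
    a ^ m ∣ D f := by
  obtain ⟨q, rfl⟩ := h
  rw [D.leibniz, D.leibniz_pow, add_tsub_cancel_right, smul_eq_mul, smul_eq_mul]
  refine dvd_add (Dvd.dvd.mul_right (pow_dvd_pow a m.le_succ) _) (Dvd.dvd.mul_left ?_ _)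
  exact dvd_smul_of_dvd _ (Dvd.dvd.mul_right dvd_rfl _)

theorem pow_dvd_dirD_of_pow_succ_dvd (e : ℤ × ℤ) {a f : BPoly} {m : ℕ} (h : a ^ (m + 1) ∣ f) :
    a ^ m ∣ dirD e f :=
  dvd_add (dvd_smul_of_dvd _ (pow_dvd_derivation_of_pow_succ_dvd (pderiv 0) h))
    (dvd_smul_of_dvd _ (pow_dvd_derivation_of_pow_succ_dvd (pderiv 1) h))

theorem dirD_mul (e : ℤ × ℤ) (f g : BPoly) :
    dirD e (f * g) = dirD e f * g + f * dirD e g := by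
  simp only [dirD, Derivation.leibniz, smul_eq_mul, MvPolynomial.smul_eq_C_mul]
  ring

theorem hasLineDerivAt_evalP_X (e : ℤ × ℤ) (n : Fin 2) (p : Pt) :
    HasLineDerivAt ℝ (evalP (X n)) (evalP (dirD e (X n)) p) p (latticeEmb e) := by
  fin_cases n
  · simpa [HasLineDerivAt, evalP, dirD, latticeEmb] using
      ((hasDerivAt_id (0 : ℝ)).mul_const (e.1 : ℝ)).const_add p.1
  · simpa [HasLineDerivAt, evalP, dirD, latticeEmb] using
      ((hasDerivAt_id (0 : ℝ)).mul_const (e.2 : ℝ)).const_add p.2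

theorem hasLineDerivAt_evalP (e : ℤ × ℤ) (f : BPoly) (p : Pt) :
    HasLineDerivAt ℝ (evalP f) (evalP (dirD e f) p) p (latticeEmb e) := by
  induction f using MvPolynomial.induction_on with
  | C r => simpa [evalP, dirD, HasLineDerivAt] using hasDerivAt_const (0 : ℝ) r
  | add f g hf hg =>
    simpa [HasLineDerivAt, evalP, dirD, mul_add, add_add_add_comm] using HasDerivAt.fun_add hf hg
  | mul_X f n hf =>
    simpa [HasLineDerivAt, evalP, dirD_mul] using
      HasDerivAt.fun_mul hf (hasLineDerivAt_evalP_X e n p)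

theorem isOpen_toSet_lower (v : ℤ × ℤ) : IsOpen (Tri.toSet ⟨v, false⟩) := by
  simp only [Tri.toSet, Bool.false_eq_true, if_false]
  exact (isOpen_lt continuous_const (by fun_prop)).and
    ((isOpen_lt (by fun_prop) (by fun_prop)).and (isOpen_lt (by fun_prop) continuous_const))

theorem latticeSum_diag_eq_zero_of_dvd {f : BPoly} {c : ℤ × ℤ →₀ ℝ} {g : Pt → ℝ}
    (hg : Continuous g)
    (heq : EqOn (evalP f) (latticeSum latticeEmb c g) (Tri.toSet ⟨(0, 0), false⟩))
    (hdvd : X 0 - X 1 ∣ f) {t : ℝ} (ht : t ∈ Ioo 0 1) :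
    latticeSum latticeEmb c g (t, t) = 0 := by
  have hcont : Continuous (latticeSum latticeEmb c g) := continuous_latticeSum _ _ hg
  have hf : Continuous (evalP f) :=
    (MvPolynomial.continuous_eval f).comp (by fun_prop)
  have hline : EqOn (fun x => evalP f (x, t)) (fun x => latticeSum latticeEmb c g (x, t))
      (Ioo t 1) := fun x hx => heq (by simpa [Tri.toSet] using ⟨ht.1, hx.1, hx.2⟩)
  have hlimit := hline.closure (by fun_prop) (by fun_prop)
    (closure_Ioo ht.2.ne ▸ left_mem_Icc.2 ht.2.le)
  obtain ⟨q, rfl⟩ := hdvd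
  simpa [evalP] using hlimit.symm

theorem eqOn_evalP_dirD_fst {i j k : ℕ} {f : BPoly} {c : ℤ × ℤ →₀ ℝ} {U : Set Pt}
    (hU : IsOpen U)
    (heq : EqOn (evalP f) (latticeSum latticeEmb c (boxN (i + 2) (j + 1) (k + 1))) U) :
    EqOn (evalP (dirD (1, 0) f))
      (latticeSum latticeEmb (backwardDiff (1, 0) c) (boxN (i + 1) (j + 1) (k + 1))) U := by
  have hemb : latticeEmb (1, 0) = (1, 0) := by simp [latticeEmb]
  rw [boxN_add_two_left, ← hemb] at heq
  exact eqOn_latticeSum_backwardDiff hU (continuous_boxN i j k) (hasLineDerivAt_evalP _ f) heq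

theorem eqOn_evalP_dirD_snd {j k : ℕ} {f : BPoly} {c : ℤ × ℤ →₀ ℝ} {U : Set Pt}
    (hU : IsOpen U) (heq : EqOn (evalP f) (latticeSum latticeEmb c (boxN 1 (j + 2) (k + 1))) U) :
    EqOn (evalP (dirD (0, 1) f))
      (latticeSum latticeEmb (backwardDiff (0, 1) c) (boxN 1 (j + 1) (k + 1))) U := by
  have hemb : latticeEmb (0, 1) = (0, 1) := by simp [latticeEmb]
  rw [boxN_one_add_two, ← hemb] at heq
  exact eqOn_latticeSum_backwardDiff hU (continuous_boxN 0 j k) (hasLineDerivAt_evalP _ f) heq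

theorem coeff_eq_zero_of_pow_dvd_of_zero {j k : ℕ} {f : BPoly} {c : ℤ × ℤ →₀ ℝ}
    (heq : EqOn (evalP f) (latticeSum latticeEmb c (boxN 1 (j + 1) (k + 1)))
      (Tri.toSet ⟨(0, 0), false⟩))
    (hdvd : (X 0 - X 1 : BPoly) ^ (j + 1) ∣ f) {w : ℤ × ℤ} (hw : w ∈ edgeIndices 0 j k) :
    c w = 0 := by
  induction j generalizing f c w with
  | zero =>
    refine coeff_eq_zero_of_eq_sub_snd (fun t => latticeSum_diag_eq_zero_of_dvd
      (continuous_boxN 0 0 k) heq (by simpa using hdvd)) (fun w hw hw' => ?_) hw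
    simp only [edgeIndices, mem_ofPred_eq, mem_Icc, Prod.fst_sub, Prod.snd_sub] at hw hw'
    lia
  | succ j ih =>
    refine coeff_eq_zero_of_eq_sub_snd (fun t => latticeSum_diag_eq_zero_of_dvd
      (continuous_boxN 0 (j + 1) k) heq ((dvd_pow_self _ (Nat.succ_ne_zero _)).trans hdvd))
      (fun w hw hw' => ?_) hw
    have hdiff : backwardDiff (0, 1) c w = 0 :=
      ih (eqOn_evalP_dirD_snd (isOpen_toSet_lower _) heq) (pow_dvd_dirD_of_pow_succ_dvd _ hdvd)
        (mem_edgeIndices_of_sub_snd_mem hw hw')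
    rwa [backwardDiff_apply, sub_eq_zero] at hdiff

theorem coeff_eq_zero_of_pow_dvd {i j k : ℕ} {f : BPoly} {c : ℤ × ℤ →₀ ℝ}
    (heq : EqOn (evalP f) (latticeSum latticeEmb c (boxN (i + 1) (j + 1) (k + 1)))
      (Tri.toSet ⟨(0, 0), false⟩))
    (hdvd : (X 0 - X 1 : BPoly) ^ (i + j + 1) ∣ f) {w : ℤ × ℤ} (hw : w ∈ edgeIndices i j k) :
    c w = 0 := by
  induction i generalizing f c w with
  | zero => exact coeff_eq_zero_of_pow_dvd_of_zero heq (by rwa [zero_add] at hdvd) hw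
  | succ i ih =>
    rw [Nat.add_right_comm i 1 j] at hdvd
    refine coeff_eq_zero_of_eq_sub_fst (fun t => latticeSum_diag_eq_zero_of_dvd
      (continuous_boxN (i + 1) j k) heq ((dvd_pow_self _ (Nat.succ_ne_zero _)).trans hdvd))
      (fun w hw hw' => ?_) hw
    have hdiff : backwardDiff (1, 0) c w = 0 :=
      ih (eqOn_evalP_dirD_fst (isOpen_toSet_lower _) heq) (pow_dvd_dirD_of_pow_succ_dvd _ hdvd)
        (mem_edgeIndices_of_sub_fst_mem hw hw')
    rwa [backwardDiff_apply, sub_eq_zero] at hdiff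

end Divisibility

/-- Let `△` be the lower triangle with vertices
`(0,0), (1,0), (1,1)` and `△'` the adjacent upper triangle with vertices
`(0,0), (0,1), (1,1)`.  If `f ∈ V_n` is divisible by `(x-y)^{n₁+n₂-1}` then all
coefficients of `f` on the translates active on both triangles vanish. -/
theorem statement4 (n₁ n₂ n₃ : ℕ) (h₁ : 1 ≤ n₁) (h₂ : 1 ≤ n₂) (h₃ : 1 ≤ n₃)
    (f : BPoly) (c : (ℤ × ℤ) →₀ ℝ)
    (hc : Represents n₁ n₂ n₃ ⟨(0, 0), false⟩ f c)
    (hdiv : (X 0 - X 1 : BPoly) ^ (n₁ + n₂ - 1) ∣ f) :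
    ∀ w ∈ activeSet n₁ n₂ n₃ ⟨(0, 0), false⟩ ∩ activeSet n₁ n₂ n₃ ⟨(0, 0), true⟩,
      c w = 0 := by
  obtain ⟨i, rfl⟩ := Nat.exists_eq_add_of_le' h₁
  obtain ⟨j, rfl⟩ := Nat.exists_eq_add_of_le' h₂
  obtain ⟨k, rfl⟩ := Nat.exists_eq_add_of_le' h₃
  rintro w ⟨hlower, hupper⟩
  have hexp : i + 1 + (j + 1) - 1 = i + j + 1 := by lia
  exact coeff_eq_zero_of_pow_dvd hc.2 (hexp ▸ hdiv) (mem_edgeIndices_of_active hlower hupper)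

end
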